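/- Let N ∈ ℕ, let α₁, …, α_N ∈ ℝ \ {0}, let x₁, …, x_N ∈ ℝ be pairwise distinct, and let W₁, …, W_N : ℝ → ℝ be continuous, compactly supported, nonnegative, each with ∫_ℝ W_m(x) dx = 1. Set v(p) = (2π)^{-1/2} Σ_{m=1}^N α_m e^{−ipx_m} and v_ε(p) = Σ_{m=1}^N α_m (2π)^{-1/2} ∫_ℝ ε⁻¹ W_m((x − x_m)/ε) e^{−ipx} dx. Then for every t ∈ ℝ and p ∈ ℝ, the integrals ∫_ℝ |φ_t(p,q)| · |v(p−q) − v_ε(p−q)| dq converge to 0 as ε → 0⁺. -/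

import Mathlib

open MeasureTheory Filter Topology

/-- The first-order Dyson kernel factor:
`φ_t(p,q) = (e^{it(p²−q²)} − 1)/(i(p²−q²))` if `p² ≠ q²`, and `t` otherwise. -/
noncomputable def phiK (t p q : ℝ) : ℂ :=
  if p ^ 2 = q ^ 2 then (t : ℂ)
  else (Complex.exp (Complex.I * t * ((p : ℂ) ^ 2 - (q : ℂ) ^ 2)) - 1) /
    (Complex.I * ((p : ℂ) ^ 2 - (q : ℂ) ^ 2))

/-!
Write `ℱ` for the Fourier transform `ℱ g (k) = (2π)^{-1/2} ∫ g(y) e^{-iky} dy`. Translation and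
dilation turn the transform of `ε⁻¹ W((· - a)/ε)` into `e^{-ika} ℱW(εk)`, so
`v(k) - v_ε(k) = ∑ₘ αₘ e^{-ikxₘ} (ℱWₘ(0) - ℱWₘ(εk))`. Since each `ℱWₘ` is bounded and continuous,
this is bounded uniformly in `ε` and `k` and tends to zero for each `k`. The kernel `φ_t(p, ·)` is
bounded and decays like `q⁻²`, hence is integrable, and dominated convergence applies.
-/

section DominatedConvergence

variable {ι X E F : Type*} [MeasurableSpace X] {μ : Measure X} [NormedAddCommGroup E]
  [NormedAddCommGroup F]

lemma tendsto_lintegral_enorm_mul_enorm_of_bounded {l : Filter ι} [l.IsCountablyGenerated]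
    {g : X → E} (hg : Integrable g μ) {D : ι → X → F} {C : ℝ}
    (hmeas : ∀ᶠ i in l, AEStronglyMeasurable (D i) μ)
    (hbound : ∀ᶠ i in l, ∀ᵐ x ∂μ, ‖D i x‖ ≤ C)
    (hlim : ∀ᵐ x ∂μ, Tendsto (fun i ↦ D i x) l (𝓝 0)) :
    Tendsto (fun i ↦ ∫⁻ x, ‖g x‖ₑ * ‖D i x‖ₑ ∂μ) l (𝓝 0) := by
  have hdom := tendsto_lintegral_filter_of_dominated_convergence' (μ := μ) (l := l)
    (F := fun i x ↦ ‖g x‖ₑ * ‖D i x‖ₑ) (f := fun _ ↦ 0) (fun x ↦ ‖g x‖ₑ * ENNReal.ofReal C)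
    ?_ ?_ ?_ ?_
  · simpa only [lintegral_zero] using hdom
  · filter_upwards [hmeas] with i hi using hg.1.enorm.mul hi.enorm
  · filter_upwards [hbound] with i hi
    filter_upwards [hi] with x hx
    gcongr
    exact ofReal_norm (D i x) ▸ ENNReal.ofReal_le_ofReal hx
  · rw [lintegral_mul_const' _ _ ENNReal.ofReal_ne_top]
    exact ENNReal.mul_ne_top hg.2.ne ENNReal.ofReal_ne_top
  · filter_upwards [hlim] with x hx
    simpa only [enorm_zero, mul_zero] using
      ENNReal.Tendsto.const_mul hx.enorm (Or.inr enorm_ne_top)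

end DominatedConvergence

section DysonKernel

variable (t p q : ℝ)

lemma measurable_phiK : Measurable (phiK t p) := by
  refine Measurable.ite ?_ (by fun_prop) (by fun_prop)
  exact measurableSet_eq_fun (by fun_prop) (by fun_prop)

lemma phiK_mul_sq_sub_sq :
    phiK t p q * ((p ^ 2 - q ^ 2 : ℝ) : ℂ) =
      (Complex.exp (Complex.I * (t * (p ^ 2 - q ^ 2) : ℝ)) - 1) / Complex.I := by
  unfold phiK
  split_ifs with h
  · simp [h]
  · have hne : (p : ℂ) ^ 2 - (q : ℂ) ^ 2 ≠ 0 := by exact_mod_cast sub_ne_zero.mpr h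
    push_cast
    field_simp

lemma norm_phiK_mul_abs_sq_sub_sq :
    ‖phiK t p q‖ * |p ^ 2 - q ^ 2| =
      ‖Complex.exp (Complex.I * (t * (p ^ 2 - q ^ 2) : ℝ)) - 1‖ := by
  simpa only [norm_mul, norm_div, Complex.norm_real, Real.norm_eq_abs, Complex.norm_I, div_one]
    using congrArg norm (phiK_mul_sq_sub_sq t p q)

lemma norm_phiK_mul_abs_sq_sub_sq_le_two : ‖phiK t p q‖ * |p ^ 2 - q ^ 2| ≤ 2 := by
  rw [norm_phiK_mul_abs_sq_sub_sq]
  refine (norm_sub_le _ _).trans_eq ?_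
  rw [Complex.norm_exp_I_mul_ofReal, norm_one, one_add_one_eq_two]

lemma norm_phiK_le : ‖phiK t p q‖ ≤ |t| := by
  rcases eq_or_ne (p ^ 2) (q ^ 2) with h | h
  · simp [phiK, h]
  · refine le_of_mul_le_mul_right ?_ (abs_pos.mpr (sub_ne_zero.mpr h))
    rw [norm_phiK_mul_abs_sq_sub_sq, ← abs_mul]
    exact Real.norm_exp_I_mul_ofReal_sub_one_le

lemma norm_phiK_le_mul_inv_one_add_sq :
    ‖phiK t p q‖ ≤ (2 + |t| * (1 + p ^ 2)) * (1 + q ^ 2)⁻¹ := by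
  rw [← div_eq_mul_inv, le_div_iff₀ (by positivity)]
  have hq : 1 + q ^ 2 ≤ |p ^ 2 - q ^ 2| + (1 + p ^ 2) := by linarith [neg_abs_le (p ^ 2 - q ^ 2)]
  calc ‖phiK t p q‖ * (1 + q ^ 2)
      ≤ ‖phiK t p q‖ * |p ^ 2 - q ^ 2| + ‖phiK t p q‖ * (1 + p ^ 2) := by
        rw [← mul_add]; gcongr
    _ ≤ 2 + |t| * (1 + p ^ 2) := by
        gcongr
        exacts [norm_phiK_mul_abs_sq_sub_sq_le_two t p q, norm_phiK_le t p q]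

lemma integrable_phiK : Integrable (phiK t p) :=
  (integrable_inv_one_add_sq.const_mul _).mono' (measurable_phiK t p).aestronglyMeasurable
    (.of_forall (norm_phiK_le_mul_inv_one_add_sq t p))

end DysonKernel

section UnitaryFourier

/-- The Fourier transform with the unitary normalization
`ℱ f (k) = (2π)^{-1/2} ∫ f(y) e^{-iky} dy`, as opposed to Mathlib's `𝓕`, whose phase is
`e^{-2πiky}`. -/
noncomputable def unitaryFourier (f : ℝ → ℂ) (k : ℝ) : ℂ :=
  ((√(2 * Real.pi) : ℝ) : ℂ)⁻¹ * ∫ y : ℝ, f y * Complex.exp (-Complex.I * k * y)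

/-- The rescaled profile `ε⁻¹ W((· - a)/ε)`, which approximates `(∫ W) δ(· - a)` as `ε → 0⁺`. -/
noncomputable def mollifier (W : ℝ → ℂ) (a ε y : ℝ) : ℂ := (ε : ℂ)⁻¹ * W ((y - a) / ε)

lemma norm_exp_neg_I_mul (k y : ℝ) : ‖Complex.exp (-Complex.I * k * y)‖ = 1 := by
  simpa only [Complex.ofReal_neg, Complex.ofReal_mul, neg_mul, mul_neg, mul_assoc] using
    Complex.norm_exp_I_mul_ofReal (-(k * y))

lemma unitaryFourier_zero (f : ℝ → ℂ) :
    unitaryFourier f 0 = ((√(2 * Real.pi) : ℝ) : ℂ)⁻¹ * ∫ y, f y := by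
  simp [unitaryFourier]

lemma norm_unitaryFourier_le (f : ℝ → ℂ) (k : ℝ) :
    ‖unitaryFourier f k‖ ≤ ‖((√(2 * Real.pi) : ℝ) : ℂ)⁻¹‖ * ∫ y, ‖f y‖ := by
  rw [unitaryFourier, norm_mul]
  gcongr
  refine (norm_integral_le_integral_norm _).trans_eq ?_
  simp only [norm_mul, norm_exp_neg_I_mul, mul_one]

lemma continuous_unitaryFourier {f : ℝ → ℂ} (hf : Integrable f) :
    Continuous (unitaryFourier f) := by
  refine continuous_const.mul (continuous_of_dominated (bound := fun y ↦ ‖f y‖) ?_ ?_ hf.norm ?_)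
  · exact fun k ↦ hf.1.mul (Continuous.aestronglyMeasurable (by fun_prop))
  · exact fun k ↦ .of_forall fun y ↦ by rw [norm_mul, norm_exp_neg_I_mul, mul_one]
  · exact .of_forall fun y ↦ by fun_prop

lemma unitaryFourier_mollifier (W : ℝ → ℂ) (a k : ℝ) {ε : ℝ} (hε : 0 < ε) :
    unitaryFourier (mollifier W a ε) k =
      Complex.exp (-Complex.I * k * a) * unitaryFourier W (ε * k) := by
  have hε' : (ε : ℂ) ≠ 0 := by exact_mod_cast hε.ne'
  let f : ℝ → ℂ := fun z ↦ Complex.exp (-Complex.I * k * a) *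
    (W z * Complex.exp (-Complex.I * (ε * k : ℝ) * z))
  have hphase (y : ℝ) : mollifier W a ε y * Complex.exp (-Complex.I * k * y) =
      (ε : ℂ)⁻¹ * f ((y - a) / ε) := by
    have hexp : -Complex.I * k * y = -Complex.I * k * a +
        -Complex.I * (ε * k : ℝ) * ((y - a) / ε : ℝ) := by
      push_cast; field_simp; ring
    rw [hexp, Complex.exp_add, mollifier]
    ring
  have hsubst : ∫ y, f ((y - a) / ε) = ε * ∫ z, f z := by
    rw [integral_sub_right_eq_self (fun y ↦ f (y / ε)) a, Measure.integral_comp_div,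
      abs_of_pos hε, Complex.real_smul]
  simp only [unitaryFourier, hphase]
  rw [integral_const_mul, hsubst, inv_mul_cancel_left₀ hε', integral_const_mul, mul_left_comm]

end UnitaryFourier

section PointInteractions

variable {ι : Type*} [Fintype ι] (α : ι → ℂ) (x : ι → ℝ) (W : ι → ℝ → ℂ)

/-- The Fourier transform `v` of `∑ₘ αₘ δ(· - xₘ)` in the convention of `unitaryFourier`, given by
its explicit formula since the potential is a measure rather than a function. -/
noncomputable def pointPotentialFourier (k : ℝ) : ℂ :=
  ((√(2 * Real.pi) : ℝ) : ℂ)⁻¹ * ∑ m, α m * Complex.exp (-Complex.I * k * x m)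

/-- The Fourier transform `v_ε` of the mollified potential `∑ₘ αₘ ε⁻¹ Wₘ((· - xₘ)/ε)`, taken
termwise. -/
noncomputable def mollifiedPotentialFourier (ε k : ℝ) : ℂ :=
  ∑ m, α m * unitaryFourier (mollifier (W m) (x m) ε) k

/-- The error `v - v_ε` with its `ε`-dependence moved into the argument of the profile transforms.
Unlike `v - v_ε` itself, this is continuous at `ε = 0`. -/
noncomputable def mollificationError (ε k : ℝ) : ℂ :=
  ∑ m, α m * Complex.exp (-Complex.I * k * x m) *
    (unitaryFourier (W m) 0 - unitaryFourier (W m) (ε * k))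

variable {W}

lemma pointPotentialFourier_sub_mollifiedPotentialFourier (hW : ∀ m, ∫ y, W m y = 1) {ε : ℝ}
    (hε : 0 < ε) (k : ℝ) :
    pointPotentialFourier α x k - mollifiedPotentialFourier α x W ε k =
      mollificationError α x W ε k := by
  simp only [pointPotentialFourier, mollifiedPotentialFourier, mollificationError,
    unitaryFourier_mollifier _ _ _ hε, unitaryFourier_zero, hW, Finset.mul_sum,
    ← Finset.sum_sub_distrib]
  exact Finset.sum_congr rfl fun m _ ↦ by ring

lemma continuous_uncurry_mollificationError (hW : ∀ m, Integrable (W m)) :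
    Continuous (Function.uncurry (mollificationError α x W)) := by
  have hF (m : ι) : Continuous (unitaryFourier (W m)) := continuous_unitaryFourier (hW m)
  unfold mollificationError Function.uncurry
  fun_prop

@[simp]
lemma mollificationError_zero_left (k : ℝ) : mollificationError α x W 0 k = 0 := by
  simp [mollificationError]

lemma norm_mollificationError_le (ε k : ℝ) :
    ‖mollificationError α x W ε k‖ ≤
      ∑ m, ‖α m‖ * (2 * (‖((√(2 * Real.pi) : ℝ) : ℂ)⁻¹‖ * ∫ y, ‖W m y‖)) := by
  refine norm_sum_le_of_le _ fun m _ ↦ ?_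
  rw [norm_mul, norm_mul, norm_exp_neg_I_mul, mul_one, two_mul]
  gcongr
  exact norm_sub_le_of_le (norm_unitaryFourier_le _ _) (norm_unitaryFourier_le _ _)

theorem finitely_many_centers_base_case_general {E : Type*} [NormedAddCommGroup E] {g : ℝ → E}
    (hg : Integrable g) (hW : ∀ m, ∫ y, W m y = 1) (p : ℝ) :
    Tendsto (fun ε : ℝ ↦ ∫⁻ q : ℝ, ‖g q‖ₑ *
        ‖pointPotentialFourier α x (p - q) - mollifiedPotentialFourier α x W ε (p - q)‖ₑ)
      (𝓝[>] 0) (𝓝 0) := by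
  have hWi (m : ι) : Integrable (W m) := .of_integral_ne_zero (by simp [hW m])
  have hcont := continuous_uncurry_mollificationError α x hWi
  have herror : Tendsto
      (fun ε : ℝ ↦ ∫⁻ q : ℝ, ‖g q‖ₑ * ‖mollificationError α x W ε (p - q)‖ₑ) (𝓝[>] 0) (𝓝 0) := by
    refine tendsto_lintegral_enorm_mul_enorm_of_bounded hg
      (.of_forall fun ε ↦ Continuous.aestronglyMeasurable (by fun_prop))
      (.of_forall fun ε ↦ .of_forall fun q ↦ norm_mollificationError_le α x ε (p - q))
      (.of_forall fun q ↦ ?_)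
    have hq : Continuous fun ε ↦ mollificationError α x W ε (p - q) := by fun_prop
    simpa using (hq.tendsto 0).mono_left nhdsWithin_le_nhds
  refine herror.congr' ?_
  filter_upwards [self_mem_nhdsWithin] with ε hε
  simp only [pointPotentialFourier_sub_mollifiedPotentialFourier α x hW hε]

end PointInteractions

/-- Base case of the induction proving Theorem 3.3 (finitely many fixed-center point
interactions): with `v` the Fourier transform of `Σ αₘ δ(· − xₘ)` and `v_ε` that of its
mollification, `∫ |φ_t(p,q)| · |v(p−q) − v_ε(p−q)| dq → 0` as `ε → 0⁺`. -/
theorem finitely_many_centers_base_case (N : ℕ) (α : Fin N → ℝ) (hα : ∀ m, α m ≠ 0)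
    (x : Fin N → ℝ) (hx : Function.Injective x)
    (W : Fin N → ℝ → ℝ) (hWc : ∀ m, Continuous (W m))
    (hWs : ∀ m, HasCompactSupport (W m)) (hWnn : ∀ m y, 0 ≤ W m y)
    (hWint : ∀ m, (∫ y : ℝ, W m y) = 1) :
    ∀ t p : ℝ, Tendsto
      (fun ε : ℝ => ∫⁻ q : ℝ, (‖phiK t p q‖₊ : ENNReal) *
        (‖(((Real.sqrt (2 * Real.pi) : ℝ) : ℂ)⁻¹ *
              ∑ m : Fin N, (α m : ℂ) * Complex.exp (-Complex.I * (p - q) * x m)) -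
            ∑ m : Fin N, (α m : ℂ) * (((Real.sqrt (2 * Real.pi) : ℝ) : ℂ)⁻¹ *
              ∫ y : ℝ, ((ε⁻¹ * W m ((y - x m) / ε) : ℝ) : ℂ) *
                Complex.exp (-Complex.I * (p - q) * y))‖₊ : ENNReal))
      (𝓝[>] 0) (𝓝 0) := by
  intro t p
  simpa only [pointPotentialFourier, mollifiedPotentialFourier, unitaryFourier, mollifier,
    Complex.ofReal_mul, Complex.ofReal_inv, Complex.ofReal_sub, enorm_eq_nnnorm] using
    finitely_many_centers_base_case_general (fun m ↦ (α m : ℂ)) x (W := fun m y ↦ (W m y : ℂ))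
      (integrable_phiK t p) (fun m ↦ by rw [integral_complex_ofReal, hWint, Complex.ofReal_one]) p
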